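/- In an NIP theory, if an unstable formula φ(x,y) has the order property witnessed by indiscernible sequences I and J, then there is a formula ϑ(y₁,y₂) with parameters from ∪J which defines a quasi-order on the monster model and linearly orders an infinite subsequence of J. -/

import Mathlib

open FirstOrder Cardinal

universe u

variable {L : FirstOrder.Language.{u, u}} {M : Type u} [L.Structure M]

/-- A formula in `m` free variables together with a tuple of parameters from `M`. -/
structure PFormula (L : FirstOrder.Language.{u, u}) (M : Type u) [L.Structure M] (m : ℕ) where
  n : ℕ
  toFormula : L.Formula (Fin m ⊕ Fin n)
  par : Fin n → M

namespace PFormula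

variable {m : ℕ}

/-- Realization of a parametrized formula by an `m`-tuple. -/
def Realize (ψ : PFormula L M m) (a : Fin m → M) : Prop :=
  ψ.toFormula.Realize (Sum.elim a ψ.par)

/-- Realization of a parametrized formula in one variable by an element. -/
def Realize1 (ψ : PFormula L M 1) (a : M) : Prop :=
  ψ.Realize fun _ => a

/-- Negation of a parametrized formula. -/
def not (ψ : PFormula L M m) : PFormula L M m :=
  ⟨ψ.n, ψ.toFormula.not, ψ.par⟩

/-- The parameters of `ψ` all lie in `B`. -/
def Over (ψ : PFormula L M m) (B : Set M) : Prop :=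
  ∀ i, ψ.par i ∈ B

end PFormula

/-- Two tuples have the same type over the parameter set `A`. -/
def SameTypeOver (L : FirstOrder.Language.{u, u}) {M : Type u} [L.Structure M]
    (A : Set M) {γ : Type} (b c : γ → M) : Prop :=
  ∀ (k : ℕ) (φ : L.Formula (γ ⊕ Fin k)) (a : Fin k → M),
    (∀ i, a i ∈ A) → (φ.Realize (Sum.elim b a) ↔ φ.Realize (Sum.elim c a))

/-- A sequence of `d`-tuples, indexed by a linear order, is indiscernible over `A`. -/
def IndiscTupleSeqOver (L : FirstOrder.Language.{u, u}) {M : Type u} [L.Structure M]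
    (A : Set M) {ι : Type*} [LinearOrder ι] {d : ℕ} (f : ι → Fin d → M) : Prop :=
  ∀ (n : ℕ) (s t : Fin n → ι), StrictMono s → StrictMono t →
    SameTypeOver L A (fun q : Fin n × Fin d => f (s q.1) q.2)
      (fun q : Fin n × Fin d => f (t q.1) q.2)

/-- A sequence of elements, indexed by a linear order, is indiscernible over `A`. -/
def IndiscSeqOver (L : FirstOrder.Language.{u, u}) {M : Type u} [L.Structure M]
    (A : Set M) {ι : Type*} [LinearOrder ι] (f : ι → M) : Prop :=
  ∀ (n : ℕ) (s t : Fin n → ι), StrictMono s → StrictMono t →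
    SameTypeOver L A (fun i => f (s i)) (fun i => f (t i))

/-- A family of elements is an indiscernible *set* over `A`: the type of a tuple of
distinct elements depends only on its length. -/
def IndiscSetOver (L : FirstOrder.Language.{u, u}) {M : Type u} [L.Structure M]
    (A : Set M) {ι : Type*} (f : ι → M) : Prop :=
  ∀ (n : ℕ) (s t : Fin n → ι), Function.Injective s → Function.Injective t →
    SameTypeOver L A (fun i => f (s i)) (fun i => f (t i))

/-- `p` is a complete consistent `m`-type over `B`: all parameters come from `B`, for each
formula over `B` it contains the formula or its negation, and every finite subset is
realized (in the monster). -/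
def IsTypeOver {m : ℕ} (p : Set (PFormula L M m)) (B : Set M) : Prop :=
  (∀ ψ ∈ p, ψ.Over B) ∧
  (∀ ψ : PFormula L M m, ψ.Over B → ψ ∈ p ∨ ψ.not ∈ p) ∧
  (∀ s : Finset (PFormula L M m), ↑s ⊆ p → ∃ a : Fin m → M, ∀ ψ ∈ s, ψ.Realize a)

/-- `p` is finitely satisfiable in `A`: every finite subset of `p` is realized by a tuple
from `A`. -/
def FinSatIn {m : ℕ} (p : Set (PFormula L M m)) (A : Set M) : Prop :=
  ∀ s : Finset (PFormula L M m), ↑s ⊆ p →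
    ∃ a : Fin m → M, (∀ i, a i ∈ A) ∧ ∀ ψ ∈ s, ψ.Realize a

/-- The complete type of an element `a` over the set `C`. -/
def tpOver (L : FirstOrder.Language.{u, u}) {M : Type u} [L.Structure M]
    (a : M) (C : Set M) : Set (PFormula L M 1) :=
  {ψ | ψ.Over C ∧ ψ.Realize1 a}

/-- `p` (a type with parameters in `B`) does not split over `A`. -/
def DoesNotSplitOver {m : ℕ} (p : Set (PFormula L M m)) (B A : Set M) : Prop :=
  ∀ (n : ℕ) (b c : Fin n → M) (φ : L.Formula (Fin m ⊕ Fin n)),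
    (∀ i, b i ∈ B) → (∀ i, c i ∈ B) → SameTypeOver L A b c →
    ((⟨n, φ, b⟩ : PFormula L M m) ∈ p ↔ (⟨n, φ, c⟩ : PFormula L M m) ∈ p)

/-- `p` (a type over `B`) is definable over `A`. -/
def DefinableOver {m : ℕ} (p : Set (PFormula L M m)) (B A : Set M) : Prop :=
  ∀ (n : ℕ) (φ : L.Formula (Fin m ⊕ Fin n)),
    ∃ (k : ℕ) (d : L.Formula (Fin n ⊕ Fin k)) (e : Fin k → M), (∀ i, e i ∈ A) ∧
      ∀ b : Fin n → M, (∀ i, b i ∈ B) →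
        ((⟨n, φ, b⟩ : PFormula L M m) ∈ p ↔ d.Realize (Sum.elim b e))

/-- The parametrized formula `ψ` divides over `A`. -/
def PFormula.Divides {m : ℕ} (ψ : PFormula L M m) (A : Set M) : Prop :=
  ∃ (f : ℕ → Fin ψ.n → M) (k : ℕ), 0 < k ∧ f 0 = ψ.par ∧ IndiscTupleSeqOver L A f ∧
    ∀ s : Finset ℕ, s.card = k →
      ¬ ∃ a : Fin m → M, ∀ i ∈ s, ψ.toFormula.Realize (Sum.elim a (f i))

/-- The (partial) type `p` forks over `A`: some finite subset of `p` implies a finite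
disjunction of formulas each of which divides over `A`. -/
def ForksOver {m : ℕ} (p : Set (PFormula L M m)) (A : Set M) : Prop :=
  ∃ (r : ℕ) (ψs : Fin r → PFormula L M m), (∀ j, (ψs j).Divides A) ∧
    ∃ s : Finset (PFormula L M m), ↑s ⊆ p ∧
      ∀ a : Fin m → M, (∀ χ ∈ s, χ.Realize a) → ∃ j, (ψs j).Realize a

/-- `p` splits strongly over `A`. -/
def SplitsStronglyOver {m : ℕ} (p : Set (PFormula L M m)) (A : Set M) : Prop :=
  ∃ (n : ℕ) (f : ℕ → Fin n → M) (φ : L.Formula (Fin m ⊕ Fin n)),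
    IndiscTupleSeqOver L A f ∧
    (⟨n, φ, f 0⟩ : PFormula L M m) ∈ p ∧ (PFormula.not ⟨n, φ, f 1⟩ : PFormula L M m) ∈ p

/-- Two tuples are of Lascar distance one over `A`: they lie on a common
`A`-indiscernible sequence. -/
def LascarDistOne (L : FirstOrder.Language.{u, u}) {M : Type u} [L.Structure M]
    (A : Set M) {n : ℕ} (b c : Fin n → M) : Prop :=
  ∃ f : ℕ → Fin n → M, IndiscTupleSeqOver L A f ∧ ∃ i j : ℕ, f i = b ∧ f j = c

/-- Two tuples have the same Lascar strong type over `A` (finite Lascar distance). -/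
def SameLstp (L : FirstOrder.Language.{u, u}) {M : Type u} [L.Structure M]
    (A : Set M) {n : ℕ} (b c : Fin n → M) : Prop :=
  Relation.ReflTransGen (fun x y => LascarDistOne L A x y) b c

/-- `p` (a type over `B`) Lascar-splits over `A`. -/
def LascarSplitsOver {m : ℕ} (p : Set (PFormula L M m)) (B A : Set M) : Prop :=
  ∃ (n : ℕ) (b c : Fin n → M) (φ : L.Formula (Fin m ⊕ Fin n)),
    (∀ i, b i ∈ B) ∧ (∀ i, c i ∈ B) ∧ SameLstp L A b c ∧
    (⟨n, φ, b⟩ : PFormula L M m) ∈ p ∧ (PFormula.not ⟨n, φ, c⟩ : PFormula L M m) ∈ p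

/-- The structure `M` is NIP ("dependent"): no formula alternates infinitely often on an
indiscernible sequence. -/
def IsNIP (L : FirstOrder.Language.{u, u}) (M : Type u) [L.Structure M] : Prop :=
  ∀ (d k : ℕ) (φ : L.Formula (Fin d ⊕ Fin k)) (f : ℕ → Fin d → M) (c : Fin k → M),
    IndiscTupleSeqOver L (∅ : Set M) f →
    ¬ ({i : ℕ | φ.Realize (Sum.elim (f i) c)}.Infinite ∧
        {i : ℕ | ¬ φ.Realize (Sum.elim (f i) c)}.Infinite)

/-- The subset `N` of the monster is `κ`-saturated: every type over a subset of `N` of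
size `< κ` which is finitely satisfiable is realized inside `N`. -/
def SetSaturated (L : FirstOrder.Language.{u, u}) {M : Type u} [L.Structure M]
    (N : Set M) (κ : Cardinal.{u}) : Prop :=
  ∀ C : Set M, C ⊆ N → #C < κ → ∀ (m : ℕ) (p : Set (PFormula L M m)),
    (∀ ψ ∈ p, ψ.Over C) →
    (∀ s : Finset (PFormula L M m), ↑s ⊆ p → ∃ a : Fin m → M, ∀ ψ ∈ s, ψ.Realize a) →
    ∃ a : Fin m → M, (∀ i, a i ∈ N) ∧ ∀ ψ ∈ p, ψ.Realize a

/-- `M` is a monster model: it is saturated in every cardinality below `#M`. -/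
def IsMonster (L : FirstOrder.Language.{u, u}) (M : Type u) [L.Structure M] : Prop :=
  ∀ κ : Cardinal.{u}, κ < #M → SetSaturated L (Set.univ : Set M) κ

/-- The average type of an `ω`-indexed indiscernible set over `C`: formulas over `C` true
of all but finitely many elements of the set. -/
def AvSet (L : FirstOrder.Language.{u, u}) {M : Type u} [L.Structure M]
    (f : ℕ → M) (C : Set M) : Set (PFormula L M 1) :=
  {ψ | ψ.Over C ∧ {i : ℕ | ¬ ψ.Realize1 (f i)}.Finite}

/-- The average type of an endless indiscernible sequence over `C`: formulas over `C`
true of all sufficiently late elements of the sequence. -/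
def AvSeq (L : FirstOrder.Language.{u, u}) {M : Type u} [L.Structure M]
    {ι : Type*} [LinearOrder ι] (f : ι → M) (C : Set M) : Set (PFormula L M 1) :=
  {ψ | ψ.Over C ∧ ∃ i₀ : ι, ∀ i ≥ i₀, ψ.Realize1 (f i)}

/-- The algebraic closure of `A` in `M`. -/
def aclSet (L : FirstOrder.Language.{u, u}) {M : Type u} [L.Structure M]
    (A : Set M) : Set M :=
  {a | ∃ ψ : PFormula L M 1, ψ.Over A ∧ ψ.Realize1 a ∧ {x : M | ψ.Realize1 x}.Finite}

/-- `p ∈ S(A)` is generically stable: there is a nonforking sequence of realizations of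
`p` over `A` which is an indiscernible set. -/
def GenericallyStable (p : Set (PFormula L M 1)) (A : Set M) : Prop :=
  ∃ f : ℕ → M,
    (∀ i, ∀ ψ ∈ p, ψ.Realize1 (f i)) ∧
    IndiscSetOver L A f ∧
    ∀ i : ℕ, ¬ ForksOver (tpOver L (f i) (A ∪ f '' {j | j < i})) A

/-- The Boolean algebra of `B`-definable subsets of `A^m`. -/
def DefSub (L : FirstOrder.Language.{u, u}) {M : Type u} [L.Structure M]
    (A B : Set M) (m : ℕ) : Set (Set (Fin m → M)) :=
  {S | ∃ ψ : PFormula L M m, ψ.Over B ∧ S = {a | (∀ i, a i ∈ A) ∧ ψ.Realize a}}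

/-- An ultrafilter on the Boolean algebra of `B`-definable subsets of `A^m`. -/
structure UltraOn (L : FirstOrder.Language.{u, u}) {M : Type u} [L.Structure M]
    (A B : Set M) (m : ℕ) where
  sets : Set (Set (Fin m → M))
  subset_def : sets ⊆ DefSub L A B m
  inter_mem : ∀ S ∈ sets, ∀ T ∈ sets, S ∩ T ∈ sets
  superset_mem : ∀ S ∈ sets, ∀ T ∈ DefSub L A B m, S ⊆ T → T ∈ sets
  nonempty_mem : ∀ S ∈ sets, S.Nonempty
  ultra : ∀ S ∈ DefSub L A B m,
    S ∈ sets ∨ ({a : Fin m → M | ∀ i, a i ∈ A} \ S) ∈ sets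

/-- The average type of an ultrafilter on `Def_m(A,B)` over `B`. -/
def AvU {A B : Set M} {m : ℕ} (U : UltraOn L A B m) : Set (PFormula L M m) :=
  {ψ | ψ.Over B ∧ {a : Fin m → M | (∀ i, a i ∈ A) ∧ ψ.Realize a} ∈ U.sets}

/-!
Suppose every 0-1 pattern were cut out on `b₀, …, bₙ` by some instance `φ(x, ·)`. By compactness
and `ω`-saturation a single instance would then alternate along an indiscernible sequence,
contradicting NIP. So some pattern `η` on a finite part of `J` is not realized, while the order
property realizes every pattern `0…01…1`. Sort `η` by adjacent transpositions `10 ↦ 01`: at some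
stage an unrealized pattern `η` becomes realized by swapping the places `i ⋖ j`. Let `ψ(x, y)` say
that `φ(x, y)` holds and that `x` has pattern `η` off `{i, j}`. Then `ψ(x, bᵢ) → ψ(x, bⱼ)` is valid
but its converse is not. By indiscernibility the same is true of any `b_p, b_q` with
`i ≤ p < q ≤ j`, so `∀ x, ψ(x, y₁) → ψ(x, y₂)` orders the part of `J` between `bᵢ` and `bⱼ`.
-/

open FirstOrder.Language Filter

section SameType

variable {N : Type*} [L.Structure N] {γ δ : Type*}

/-- Tuples `v` in `M` and `w` in `N` have the same complete type over `∅`. Unlike in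
`SameTypeOver`, the tuples may be infinite and may lie in different structures. -/
def SameType (L : FirstOrder.Language.{u, u}) {M : Type u} [L.Structure M] {N : Type*}
    [L.Structure N] (v : γ → M) (w : γ → N) : Prop :=
  ∀ ψ : L.Formula γ, ψ.Realize v ↔ ψ.Realize w

namespace SameType

theorem comp {v : γ → M} {w : γ → N} (h : SameType L v w) (s : δ → γ) :
    SameType L (v ∘ s) (w ∘ s) := fun ψ => by
  simpa only [Formula.realize_relabel] using h (ψ.relabel s)

theorem of_forall_imp {v : γ → M} {w : γ → N}
    (h : ∀ ψ : L.Formula γ, ψ.Realize w → ψ.Realize v) : SameType L v w := fun ψ =>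
  ⟨fun hv => by_contra fun hw => h ψ.not hw hv, h ψ⟩

theorem of_elementarilyEquivalent [IsEmpty γ] (h : M ≅[L] N) (v : γ → M) (w : γ → N) :
    SameType L v w := fun ψ => by
  have hψ := elementarilyEquivalent_iff.1 h (ψ.relabel isEmptyElim)
  simp only [Sentence.Realize, Formula.realize_relabel] at hψ
  convert hψ

theorem of_forall_fin {v : ℕ → M} {w : ℕ → N}
    (h : ∀ k, SameType L (fun i : Fin k => v i) (fun i : Fin k => w i)) : SameType L v w := by
  intro ψ
  obtain ⟨m, hm⟩ := ψ.freeVarFinset.bddAbove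
  let f : ψ.freeVarFinset → Fin (m + 1) := fun a => ⟨a, Nat.lt_succ_of_le (hm a.2)⟩
  exact (BoundedFormula.realize_restrictFreeVar (f := f) v fun _ => rfl).symm.trans <|
    (h (m + 1) (ψ.restrictFreeVar f)).trans <|
      BoundedFormula.realize_restrictFreeVar (f := f) w fun _ => rfl

end SameType

theorem sameTypeOver_empty_iff {γ : Type} {v w : γ → M} :
    SameTypeOver L ∅ v w ↔ SameType L v w := by
  refine ⟨fun h ψ => ?_, fun h k ψ c hc => ?_⟩
  · simpa only [Formula.realize_relabel, Sum.elim_comp_inl] using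
      h 0 (ψ.relabel Sum.inl) Fin.elim0 fun i => i.elim0
  · have : IsEmpty (Fin k) := ⟨hc⟩
    have key (v : γ → M) : Sum.elim v c = v ∘ Sum.elim id isEmptyElim := by
      ext (i | i)
      exacts [rfl, isEmptyElim i]
    simpa only [key] using h.comp (Sum.elim id isEmptyElim) ψ

namespace IndiscTupleSeqOver

variable {ι : Type*} [LinearOrder ι] {e : ℕ}

theorem sameType {b : ι → Fin e → M} (hb : IndiscTupleSeqOver L ∅ b) {n : ℕ} {s t : Fin n → ι}
    (hs : StrictMono s) (ht : StrictMono t) :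
    SameType L (Function.uncurry (b ∘ s)) (Function.uncurry (b ∘ t)) :=
  sameTypeOver_empty_iff.1 (hb n s t hs ht)

theorem of_sameType {b b' : ι → Fin e → M}
    (h : SameType L (Function.uncurry b') (Function.uncurry b)) (hb : IndiscTupleSeqOver L ∅ b) :
    IndiscTupleSeqOver L ∅ b' := by
  intro n s t hs ht
  have hcomp (r : Fin n → ι) := h.comp (Prod.map r (id : Fin e → Fin e))
  exact sameTypeOver_empty_iff.2 fun ψ =>
    (hcomp s ψ).trans ((hb.sameType hs ht ψ).trans (hcomp t ψ).symm)

end IndiscTupleSeqOver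

end SameType

section Saturation

variable {N : Type*} [L.Structure N]

theorem SetSaturated.of_finite [Finite M] (κ : Cardinal.{u}) :
    SetSaturated L (Set.univ : Set M) κ := by
  intro C _ _ m p _ hfin
  by_contra! hp
  choose ψ hψp hψ using fun a : Fin m → M => hp a fun _ => Set.mem_univ _
  classical
  have := Fintype.ofFinite (Fin m → M)
  obtain ⟨a, ha⟩ := hfin (Finset.univ.image ψ) (by simpa [Set.range_subset_iff] using hψp)
  exact hψ a (ha (ψ a) (Finset.mem_image_of_mem ψ (Finset.mem_univ a)))

theorem IsMonster.setSaturated_aleph0 (hM : IsMonster L M) :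
    SetSaturated L (Set.univ : Set M) ℵ₀ := by
  cases finite_or_infinite M
  · exact .of_finite ℵ₀
  · intro C hC hCfin
    obtain ⟨n, hn⟩ := lt_aleph0.1 hCfin
    have hlt : ((n + 1 : ℕ) : Cardinal.{u}) < #M := natCast_lt_aleph0.trans_le (aleph0_le_mk M)
    exact hM _ hlt C hC (hn ▸ Nat.cast_lt.2 n.lt_succ_self)

theorem SetSaturated.exists_sameType_sumElim (hsat : SetSaturated L (Set.univ : Set M) ℵ₀)
    {k m : ℕ} {v : Fin k → M} {w : Fin k → N} (h : SameType L v w) (x : Fin m → N) :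
    ∃ y : Fin m → M, SameType L (Sum.elim y v) (Sum.elim x w) := by
  let p : Set (PFormula L M m) :=
    {χ | ∃ ψ : L.Formula (Fin m ⊕ Fin k), ψ.Realize (Sum.elim x w) ∧ ⟨k, ψ, v⟩ = χ}
  have hover : ∀ χ ∈ p, χ.Over (Set.range v) := by
    rintro _ ⟨ψ, -, rfl⟩ i
    exact ⟨i, rfl⟩
  have hfin : ∀ s : Finset (PFormula L M m), ↑s ⊆ p → ∃ y, ∀ χ ∈ s, χ.Realize y := by
    intro s hs
    choose ψ hψ hψs using fun χ : s => hs χ.2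
    let θ : L.Formula (Fin k) := .iExs (Fin m) ((Formula.iInf ψ).relabel Sum.swap)
    have hθ : θ.Realize w := by
      simp only [θ, Formula.realize_iExs, Formula.realize_relabel, Formula.realize_iInf,
        Sum.elim_swap]
      exact ⟨x, hψ⟩
    have hθ' := (h θ).2 hθ
    simp only [θ, Formula.realize_iExs, Formula.realize_relabel, Formula.realize_iInf,
      Sum.elim_swap] at hθ'
    obtain ⟨y, hy⟩ := hθ'
    exact ⟨y, fun χ hχ => congrArg (PFormula.Realize · y) (hψs ⟨χ, hχ⟩) ▸ hy ⟨χ, hχ⟩⟩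
  obtain ⟨y, -, hy⟩ := hsat (Set.range v) (Set.subset_univ _) (lt_aleph0_of_finite _) m p hover hfin
  exact ⟨y, .of_forall_imp fun ψ hψ => hy _ ⟨ψ, hψ, rfl⟩⟩

theorem SetSaturated.exists_sameType_snoc (hsat : SetSaturated L (Set.univ : Set M) ℵ₀) {k : ℕ}
    {v : Fin k → M} {w : Fin (k + 1) → N} (h : SameType L v (Fin.init w)) :
    ∃ y : M, SameType L (Fin.snoc v y : Fin (k + 1) → M) w := by
  obtain ⟨y, hy⟩ := hsat.exists_sameType_sumElim h fun _ : Fin 1 => w (Fin.last k)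
  refine ⟨y 0, ?_⟩
  convert hy.comp (Fin.snoc (α := fun _ => Fin 1 ⊕ Fin k) Sum.inr (Sum.inl 0)) using 1 <;>
    ext i <;> cases i using Fin.lastCases <;> simp [Fin.init]

theorem exists_nat_seq_of_forall_snoc {X : Type*} {P : ∀ k, (Fin k → X) → Prop}
    (zero : P 0 Fin.elim0) (snoc : ∀ k v, P k v → ∃ y, P (k + 1) (Fin.snoc v y)) :
    ∃ f : ℕ → X, ∀ k, P k fun i => f i := by
  choose next hnext using snoc
  let v : (k : ℕ) → {v : Fin k → X // P k v} := fun k =>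
    k.rec ⟨Fin.elim0, zero⟩ fun k v => ⟨Fin.snoc v.1 (next k v.1 v.2), hnext k v.1 v.2⟩
  let f : ℕ → X := fun i => (v (i + 1)).1 (Fin.last i)
  have hv : ∀ k, (v k).1 = fun i : Fin k => f i := by
    intro k
    induction k with
    | zero => exact Subsingleton.elim _ _
    | succ k ih =>
      ext i
      cases i using Fin.lastCases with
      | last => rfl
      | cast i =>
        simp only [v, Fin.snoc_castSucc]
        exact congrFun ih i
  exact ⟨f, fun k => hv k ▸ (v k).2⟩

theorem SetSaturated.exists_sameType (hsat : SetSaturated L (Set.univ : Set M) ℵ₀)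
    (hMN : M ≅[L] N) {γ : Type*} [Countable γ] (w : γ → N) : ∃ v : γ → M, SameType L v w := by
  cases isEmpty_or_nonempty γ
  · exact ⟨isEmptyElim, .of_elementarilyEquivalent hMN _ _⟩
  · obtain ⟨g, hg⟩ := exists_surjective_nat γ
    obtain ⟨v, hv⟩ := exists_nat_seq_of_forall_snoc
      (P := fun k v => SameType L v fun i : Fin k => w (g i))
      (.of_elementarilyEquivalent hMN _ _) fun k v hv => hsat.exists_sameType_snoc hv
    refine ⟨v ∘ Function.surjInv hg, ?_⟩
    simpa only [Function.comp_def, Function.surjInv_eq hg] using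
      (SameType.of_forall_fin (w := w ∘ g) hv).comp (Function.surjInv hg)

end Saturation

section Trace

variable {α β κ : Type*}

/-- The pattern that `x` cuts out on the sequence `b` via `φ`: at `k`, whether `φ(x, b k)` holds.
Patterns are `Prop`-valued, so that they are compared and sorted in the order `False < True`. -/
def trace (φ : L.Formula (α ⊕ β)) (b : κ → β → M) (x : α → M) : κ → Prop :=
  fun k => φ.Realize (Sum.elim x (b k))

theorem exists_elementaryEmbedding_mem_range_trace [Nonempty M] {φ : L.Formula (α ⊕ β)}
    {b : ℕ → β → M} {η : ℕ → Prop}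
    (h : ∀ n, (fun j : Fin n => η j) ∈ Set.range (trace φ fun j : Fin n => b j)) :
    ∃ (N : Type u) (_ : L.Structure N) (f : M ↪ₑ[L] N),
      η ∈ Set.range (trace φ fun j => f ∘ b j) := by
  choose x hx using h
  let U : Ultrafilter ℕ := hyperfilter ℕ
  let f : M ↪ₑ[L] (U : Filter ℕ).Product fun _ => M :=
    { toFun := fun c => ((fun _ => c : ℕ → M) : (U : Filter ℕ).Product fun _ => M)
      map_formula' := fun n ψ v =>
        (Ultraproduct.realize_formula_cast ψ fun i _ => v i).trans eventually_const }
  let y : α → (U : Filter ℕ).Product fun _ => M := fun i => ((fun n => x n i : ℕ → M) : _)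
  refine ⟨_, _, f, y, funext fun j => propext ?_⟩
  have hU : ∀ᶠ n in (U : Filter ℕ), (φ.Realize (Sum.elim (x n) (b j)) ↔ η j) := by
    filter_upwards [Nat.hyperfilter_le_atTop (eventually_gt_atTop j)] with n hn
    exact iff_of_eq (congrFun (hx n) ⟨j, hn⟩)
  have hcast : (fun i => ((fun n => Sum.elim (x n) (b j) i : ℕ → M) : (U : Filter ℕ).Product _)) =
      Sum.elim y (f ∘ b j) := by
    ext (i | l) <;> rfl
  exact (iff_of_eq (congrArg φ.Realize hcast.symm)).trans <|
    (Ultraproduct.realize_formula_cast φ _).trans <| (eventually_congr hU).trans eventually_const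

theorem SetSaturated.exists_trace_eq [Nonempty M] [Countable α] [Countable β]
    (hsat : SetSaturated L (Set.univ : Set M) ℵ₀) {φ : L.Formula (α ⊕ β)} {b : ℕ → β → M}
    {η : ℕ → Prop}
    (h : ∀ n, (fun j : Fin n => η j) ∈ Set.range (trace φ fun j : Fin n => b j)) :
    ∃ b' : ℕ → β → M, SameType L (Function.uncurry b') (Function.uncurry b) ∧
      η ∈ Set.range (trace φ b') := by
  obtain ⟨N, _, f, y, rfl⟩ := exists_elementaryEmbedding_mem_range_trace h
  obtain ⟨v, hv⟩ := hsat.exists_sameType f.elementarilyEquivalent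
    (Sum.elim y (f ∘ Function.uncurry b))
  rw [← Sum.elim_comp_inl_inr v] at hv
  refine ⟨Function.curry (v ∘ Sum.inr), fun ψ => ?_, v ∘ Sum.inl, funext fun j => propext ?_⟩
  · exact (hv.comp Sum.inr ψ).trans (f.map_formula ψ _)
  · have := hv.comp (Sum.map id (Prod.mk j)) φ
    rwa [Sum.elim_comp_map, Sum.elim_comp_map] at this

theorem IsNIP.exists_notMem_range_trace [Nonempty M] (hNIP : IsNIP L M)
    (hsat : SetSaturated L (Set.univ : Set M) ℵ₀) {d e : ℕ} (φ : L.Formula (Fin d ⊕ Fin e))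
    {b : ℕ → Fin e → M} (hb : IndiscTupleSeqOver L ∅ b) {η : ℕ → Prop}
    (hη : {i | η i}.Infinite) (hη' : {i | ¬ η i}.Infinite) :
    ∃ n, (fun j : Fin n => η j) ∉ Set.range (trace φ fun j : Fin n => b j) := by
  by_contra! h
  obtain ⟨b', hb', x, rfl⟩ := hsat.exists_trace_eq h
  refine hNIP e d (φ.relabel Sum.swap) b' x (.of_sameType hb' hb) ?_
  simp only [Formula.realize_relabel, Sum.elim_swap]
  exact ⟨hη, hη'⟩

end Trace

section Sorting

variable {κ ι : Type*} [LinearOrder κ] [LinearOrder ι]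

theorem exists_covBy_swap {α : Type*} [LinearOrder α] [WellFoundedLT α] [Finite κ]
    {P : (κ → α) → Prop} (hmono : ∀ g, Monotone g → P g) {f : κ → α} (hf : ¬ P f) :
    ∃ g i j, i ⋖ j ∧ g j < g i ∧ ¬ P g ∧ P (g ∘ Equiv.swap i j) := by
  have := Fintype.ofFinite κ
  have := Fintype.toLocallyFiniteOrder (α := κ)
  -- Undoing an adjacent inversion decreases `g` lexicographically.
  obtain ⟨g, hg, hmin⟩ :=
    (wellFounded_lt (α := Lex (κ → α))).has_min {g | ¬ P (ofLex g)} ⟨toLex f, hf⟩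
  have hnot : ¬ Monotone (ofLex g) := fun h => hg (hmono _ h)
  simp only [monotone_iff_forall_covBy, not_forall, not_le] at hnot
  obtain ⟨i, j, hij, hlt⟩ := hnot
  exact ⟨ofLex g, i, j, hij, hlt, hg, by_contra fun h => hmin (toLex _) h (Pi.lex_desc hij.le hlt)⟩

theorem exists_forall_lt_iff [Finite κ] [NoMinOrder ι] [Nonempty ι] {s : κ → ι}
    (hs : StrictMono s) {η : κ → Prop} (hη : Monotone η) : ∃ p, ∀ k, p < s k ↔ η k := by
  by_cases hall : ∀ k, η k
  · obtain ⟨q, hq⟩ := (Set.finite_range s).bddBelow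
    obtain ⟨p, hp⟩ := exists_lt q
    exact ⟨p, fun k => iff_of_true (hp.trans_le (hq (Set.mem_range_self k))) (hall k)⟩
  · obtain ⟨m, hm⟩ := (Set.toFinite {k | ¬ η k}).exists_maximal (not_forall.1 hall)
    refine ⟨s m, fun k => hs.lt_iff_lt.trans ⟨fun hk => ?_, fun hk => ?_⟩⟩
    · exact by_contra fun h => hm.not_gt h hk
    · exact lt_of_not_ge fun h => hm.prop (hη h hk)

theorem strictMono_update_update {s : κ → ι} (hs : StrictMono s) {i j : κ} (hij : i ⋖ j) {x y : ι}
    (hx : s i ≤ x) (hxy : x < y) (hy : y ≤ s j) :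
    StrictMono (Function.update (Function.update s i x) j y) := by
  intro k l hkl
  have hki : k < i → s k < x := fun h => (hs h).trans_le hx
  have hjl : j < l → y < s l := fun h => hy.trans_lt (hs h)
  have hskl := hs hkl
  have hlt := hij.1
  have hk := @hij.2 k
  have hl := @hij.2 l
  simp only [Function.update_apply]
  grind

end Sorting

section TraceLE

variable {α β κ : Type*} {φ : L.Formula (α ⊕ β)} {η : κ → Prop} {s : Set κ} {z : κ → β → M}

/-- The quasi-order `∀ x, ψ(x, u) → ψ(x, v)`, where `ψ(x, y)` is the strengthening of `φ(x, y)`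
saying in addition that the pattern of `x` on `z` agrees with `η` on `s`. This addition does not
depend on `y`, so it is assumed only once. -/
def TraceLE (φ : L.Formula (α ⊕ β)) (η : κ → Prop) (s : Set κ) (z : κ → β → M) (u v : β → M) :
    Prop :=
  ∀ x, (∀ k ∈ s, trace φ z x k ↔ η k) → φ.Realize (Sum.elim x u) → φ.Realize (Sum.elim x v)

open Classical in
/-- The formula defining `TraceLE`, with the entries of `z` as parameters. -/
noncomputable def traceLEFormula [Finite α] [Finite κ] (φ : L.Formula (α ⊕ β)) (η : κ → Prop)
    (s : Set κ) : L.Formula ((β ⊕ β) ⊕ κ × β) :=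
  let φAt (y : β → (β ⊕ β) ⊕ κ × β) : L.Formula (((β ⊕ β) ⊕ κ × β) ⊕ α) :=
    φ.relabel (Sum.elim Sum.inr (Sum.inl ∘ y))
  let agreesAt (k : s) :=
    if η k then φAt (Sum.inr ∘ Prod.mk ↑k) else (φAt (Sum.inr ∘ Prod.mk ↑k)).not
  .iAlls α ((Formula.iInf agreesAt).imp ((φAt (Sum.inl ∘ Sum.inl)).imp (φAt (Sum.inl ∘ Sum.inr))))

theorem realize_traceLEFormula [Finite α] [Finite κ] {u v : β → M} :
    (traceLEFormula φ η s).Realize (Sum.elim (Sum.elim u v) (Function.uncurry z)) ↔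
      TraceLE φ η s z u v := by
  have hφ (x : α → M) (y : β → (β ⊕ β) ⊕ κ × β) :
      (φ.relabel (Sum.elim Sum.inr (Sum.inl ∘ y))).Realize
          (Sum.elim (Sum.elim (Sum.elim u v) (Function.uncurry z)) x) ↔
        φ.Realize (Sum.elim x (Sum.elim (Sum.elim u v) (Function.uncurry z) ∘ y)) := by
    rw [Formula.realize_relabel, Sum.comp_elim, Sum.elim_comp_inr, ← Function.comp_assoc,
      Sum.elim_comp_inl]
  simp only [traceLEFormula, Formula.realize_iAlls, Formula.realize_imp, Formula.realize_iInf,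
    Subtype.forall, TraceLE]
  refine forall_congr' fun x => imp_congr (forall₂_congr fun k _ => ?_) ?_
  · split_ifs with h
    · exact (hφ x _).trans (iff_true_right h).symm
    · exact (not_congr (hφ x _)).trans (iff_false_right h).symm
  · exact imp_congr (hφ x _) (hφ x _)

theorem TraceLE.isPreorder : IsPreorder (β → M) (TraceLE φ η s z) where
  refl _ := fun _ _ => id
  trans _ _ _ huv hvw := fun x hx => hvw x hx ∘ huv x hx

theorem traceLE_congr {z' : κ → β → M} (h : Set.EqOn z z' s) :
    TraceLE φ η s z = TraceLE φ η s z' := by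
  have htrace (x : α → M) : ∀ k ∈ s, trace φ z x k = trace φ z' x k := fun k hk => by
    rw [trace, trace, h hk]
  ext u v
  simp +contextual only [TraceLE, htrace]

theorem traceLE_of_notMem_range {i j : κ} (hη : η ∉ Set.range (trace φ z)) (hi : η i)
    (hj : ¬ η j) : TraceLE φ η {i, j}ᶜ z (z i) (z j) := by
  refine fun x hx hxi => by_contra fun hxj => hη ⟨x, funext fun k => ?_⟩
  by_cases hk : k ∈ ({i, j} : Set κ)
  · obtain rfl | rfl := hk
    exacts [propext (iff_of_true hxi hi), propext (iff_of_false hxj hj)]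
  · exact propext (hx k hk)

theorem not_traceLE_of_swap_mem_range [DecidableEq κ] {i j : κ}
    (hη : η ∘ Equiv.swap i j ∈ Set.range (trace φ z)) (hi : η i) (hj : ¬ η j) :
    ¬ TraceLE φ η {i, j}ᶜ z (z j) (z i) := by
  obtain ⟨x, hx⟩ := hη
  have hxk (k : κ) : trace φ z x k ↔ η (Equiv.swap i j k) := iff_of_eq (congrFun hx k)
  have hoff : ∀ k ∈ ({i, j} : Set κ)ᶜ, trace φ z x k ↔ η k := fun k hk => by
    rw [hxk, Equiv.swap_apply_of_ne_of_ne (fun h => hk (.inl h)) fun h => hk (.inr h)]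
  have hxi : ¬ trace φ z x i := by rwa [hxk, Equiv.swap_apply_left]
  have hxj : trace φ z x j := by rwa [hxk, Equiv.swap_apply_right]
  exact fun h => hxi (h x hoff hxj)

end TraceLE

section OrderProperty

variable {ι : Type*} [LinearOrder ι] {d e n : ℕ} {φ : L.Formula (Fin d ⊕ Fin e)}
  {a : ι → Fin d → M} {b : ι → Fin e → M}

theorem IndiscTupleSeqOver.comp_strictMono {A : Set M} {κ : Type*} [LinearOrder κ]
    (hb : IndiscTupleSeqOver L A b) {s : κ → ι} (hs : StrictMono s) :
    IndiscTupleSeqOver L A (b ∘ s) :=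
  fun m t t' ht ht' => hb m (s ∘ t) (s ∘ t') (hs.comp ht) (hs.comp ht')

theorem mem_range_trace_of_monotone [NoMinOrder ι] [Nonempty ι] {κ : Type*} [LinearOrder κ]
    [Finite κ] (hop : ∀ p q, φ.Realize (Sum.elim (a p) (b q)) ↔ p < q) {s : κ → ι}
    (hs : StrictMono s) {η : κ → Prop} (hη : Monotone η) : η ∈ Set.range (trace φ (b ∘ s)) := by
  obtain ⟨p, hp⟩ := exists_forall_lt_iff hs hη
  exact ⟨a p, funext fun k => propext ((hop p (s k)).trans (hp k))⟩

theorem IndiscTupleSeqOver.traceLE_iff (hb : IndiscTupleSeqOver L ∅ b) {s t : Fin n → ι}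
    (hs : StrictMono s) (ht : StrictMono t) {η : Fin n → Prop} {S : Set (Fin n)} {k l : Fin n} :
    TraceLE φ η S (b ∘ s) (b (s k)) (b (s l)) ↔ TraceLE φ η S (b ∘ t) (b (t k)) (b (t l)) := by
  have := (hb.sameType hs ht).comp (Sum.elim (Sum.elim (Prod.mk k) (Prod.mk l)) id)
    (traceLEFormula φ η S)
  simp only [Sum.comp_elim, Function.comp_id] at this
  exact realize_traceLEFormula.symm.trans (this.trans realize_traceLEFormula)

theorem IndiscTupleSeqOver.traceLE_iff_le (hb : IndiscTupleSeqOver L ∅ b) {s : Fin n → ι}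
    (hs : StrictMono s) {η : Fin n → Prop} {i j : Fin n} (hij : i ⋖ j) (hi : η i) (hj : ¬ η j)
    (hη : η ∉ Set.range (trace φ (b ∘ s)))
    (hswap : η ∘ Equiv.swap i j ∈ Set.range (trace φ (b ∘ s))) {p q : ι}
    (hp : p ∈ Set.Icc (s i) (s j)) (hq : q ∈ Set.Icc (s i) (s j)) :
    TraceLE φ η {i, j}ᶜ (b ∘ s) (b p) (b q) ↔ p ≤ q := by
  have of_lt {p q : ι} (hp : s i ≤ p) (hpq : p < q) (hq : q ≤ s j) :
      TraceLE φ η {i, j}ᶜ (b ∘ s) (b p) (b q) ∧ ¬ TraceLE φ η {i, j}ᶜ (b ∘ s) (b q) (b p) := by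
    let t := Function.update (Function.update s i p) j q
    have ht : StrictMono t := strictMono_update_update hs hij hp hpq hq
    have hti : t i = p := (Function.update_of_ne hij.ne ..).trans (Function.update_self ..)
    have htj : t j = q := Function.update_self ..
    have hst : Set.EqOn (b ∘ s) (b ∘ t) {i, j}ᶜ := fun k hk => by
      obtain ⟨hki, hkj⟩ := not_or.1 hk
      exact congrArg b
        ((Function.update_of_ne hkj ..).trans (Function.update_of_ne hki ..)).symm
    rw [traceLE_congr hst, ← hti, ← htj, hb.traceLE_iff ht hs, hb.traceLE_iff ht hs]
    exact ⟨traceLE_of_notMem_range hη hi hj, not_traceLE_of_swap_mem_range hswap hi hj⟩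
  obtain hpq | rfl | hqp := lt_trichotomy p q
  · exact iff_of_true (of_lt hp.1 hpq hq.2).1 hpq.le
  · exact iff_of_true (TraceLE.isPreorder.refl _) le_rfl
  · exact iff_of_false (of_lt hq.1 hqp hp.2).2 hqp.not_ge

theorem nonempty_of_orderProperty [NoMaxOrder ι] [Nonempty ι]
    (hop : ∀ p q, φ.Realize (Sum.elim (a p) (b q)) ↔ p < q) : Nonempty M := by
  by_contra hM
  rw [not_nonempty_iff] at hM
  obtain ⟨p⟩ := ‹Nonempty ι›
  obtain ⟨q, hpq⟩ := exists_gt p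
  have hpp : φ.Realize (Sum.elim (a p) (b p)) := Subsingleton.elim (b q) (b p) ▸ (hop p q).2 hpq
  exact lt_irrefl p ((hop p p).1 hpp)

theorem exists_traceLE_iff_le [NoMinOrder ι] [NoMaxOrder ι] [Nonempty ι]
    (hsat : SetSaturated L (Set.univ : Set M) ℵ₀) (hNIP : IsNIP L M)
    (hb : IndiscTupleSeqOver L ∅ b) (hop : ∀ p q, φ.Realize (Sum.elim (a p) (b q)) ↔ p < q) :
    ∃ (n : ℕ) (s : Fin n → ι) (η : Fin n → Prop) (S : Set (Fin n)) (p₀ q₀ : ι), p₀ < q₀ ∧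
      ∀ p ∈ Set.Icc p₀ q₀, ∀ q ∈ Set.Icc p₀ q₀, TraceLE φ η S (b ∘ s) (b p) (b q) ↔ p ≤ q := by
  have := nonempty_of_orderProperty hop
  obtain ⟨r, hr⟩ := Nat.exists_strictMono ι
  have hodd : {k : ℕ | ¬ Even k}.Infinite := by
    simpa only [Nat.not_even_iff_odd] using Nat.frequently_atTop_iff_infinite.1 Nat.frequently_odd
  obtain ⟨n, hn⟩ := hNIP.exists_notMem_range_trace hsat φ (hb.comp_strictMono hr)
    (Nat.frequently_atTop_iff_infinite.1 Nat.frequently_even) hodd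
  let s : Fin n → ι := fun k => r k
  have hs : StrictMono s := hr.comp Fin.val_strictMono
  obtain ⟨η, i, j, hij, hlt, hη, hswap⟩ := exists_covBy_swap
    (P := (· ∈ Set.range (trace φ (b ∘ s)))) (fun g => mem_range_trace_of_monotone hop hs) hn
  obtain ⟨-, hi, hj⟩ : (η j → η i) ∧ η i ∧ ¬ η j := by
    simpa only [lt_iff_le_not_ge, le_Prop_eq, Classical.not_imp] using hlt
  exact ⟨n, s, η, {i, j}ᶜ, s i, s j, hs hij.lt, fun p hp q hq =>
    hb.traceLE_iff_le hs hij hi hj hη hswap hp hq⟩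

end OrderProperty

theorem order_property_gives_quasi_order_general {ι : Type*} [LinearOrder ι] [NoMinOrder ι]
    [NoMaxOrder ι] [Nonempty ι] {d e : ℕ}
    (hsat : SetSaturated L (Set.univ : Set M) ℵ₀) (hNIP : IsNIP L M)
    (φ : L.Formula (Fin d ⊕ Fin e)) (a : ι → Fin d → M) (b : ι → Fin e → M)
    (hb : IndiscTupleSeqOver L (∅ : Set M) b)
    (hop : ∀ p q, φ.Realize (Sum.elim (a p) (b q)) ↔ p < q) :
    ∃ (k : ℕ) (ϑ : L.Formula ((Fin e ⊕ Fin e) ⊕ Fin k)) (c : Fin k → M),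
      (∀ i, ∃ q j, c i = b q j) ∧
      IsPreorder (Fin e → M) (fun u v => ϑ.Realize (Sum.elim (Sum.elim u v) c)) ∧
      ∃ p₀ q₀, p₀ < q₀ ∧ ∀ p ∈ Set.Icc p₀ q₀, ∀ q ∈ Set.Icc p₀ q₀,
        (ϑ.Realize (Sum.elim (Sum.elim (b p) (b q)) c) ↔ p ≤ q) := by
  obtain ⟨n, s, η, S, p₀, q₀, hlt, hle⟩ := exists_traceLE_iff_le hsat hNIP hb hop
  let E : Fin n × Fin e ≃ Fin (n * e) := finProdFinEquiv
  let ϑ : L.Formula ((Fin e ⊕ Fin e) ⊕ Fin (n * e)) :=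
    (traceLEFormula φ η S).relabel (Sum.map id E)
  let c : Fin (n * e) → M := Function.uncurry (b ∘ s) ∘ E.symm
  have hϑ (u v : Fin e → M) :
      ϑ.Realize (Sum.elim (Sum.elim u v) c) ↔ TraceLE φ η S (b ∘ s) u v := by
    rw [Formula.realize_relabel, Sum.elim_comp_map, Function.comp_id, Function.comp_assoc,
      Equiv.symm_comp_self, Function.comp_id, realize_traceLEFormula]
  refine ⟨n * e, ϑ, c, fun i => ⟨s (E.symm i).1, (E.symm i).2, rfl⟩, ?_, p₀, q₀, hlt, ?_⟩
  · simpa only [hϑ] using TraceLE.isPreorder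
  · simpa only [hϑ] using hle

/-- In an NIP theory, if an unstable formula `φ(x,y)` has the order
property witnessed by indiscernible sequences `I` and `J` (indexed by ℚ), then there is
a formula `ϑ(y₁,y₂)` with parameters from `∪J` which defines a quasi-order on the
monster model and linearly orders an infinite subsequence of `J`. -/
theorem order_property_gives_quasi_order
    (hM : IsMonster L M) (hNIP : IsNIP L M)
    {d e : ℕ} (φ : L.Formula (Fin d ⊕ Fin e))
    (a : ℚ → Fin d → M) (b : ℚ → Fin e → M)
    (ha : IndiscTupleSeqOver L (∅ : Set M) a)
    (hb : IndiscTupleSeqOver L (∅ : Set M) b)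
    (hop : ∀ i j : ℚ, φ.Realize (Sum.elim (a i) (b j)) ↔ i < j) :
    ∃ (k : ℕ) (ϑ : L.Formula ((Fin e ⊕ Fin e) ⊕ Fin k)) (c : Fin k → M),
      -- the parameters come from ∪J
      (∀ i : Fin k, ∃ (q : ℚ) (j : Fin e), c i = b q j) ∧
      -- ϑ is reflexive on the monster
      (∀ u : Fin e → M, ϑ.Realize (Sum.elim (Sum.elim u u) c)) ∧
      -- ϑ is transitive on the monster
      (∀ u v w : Fin e → M, ϑ.Realize (Sum.elim (Sum.elim u v) c) →
        ϑ.Realize (Sum.elim (Sum.elim v w) c) →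
        ϑ.Realize (Sum.elim (Sum.elim u w) c)) ∧
      -- ϑ linearly orders an infinite subsequence of J
      ∃ S : Set ℚ, S.Infinite ∧
        (∀ q₁ ∈ S, ∀ q₂ ∈ S,
          ϑ.Realize (Sum.elim (Sum.elim (b q₁) (b q₂)) c) ∨
          ϑ.Realize (Sum.elim (Sum.elim (b q₂) (b q₁)) c)) ∧
        (∀ q₁ ∈ S, ∀ q₂ ∈ S,
          ϑ.Realize (Sum.elim (Sum.elim (b q₁) (b q₂)) c) →
          ϑ.Realize (Sum.elim (Sum.elim (b q₂) (b q₁)) c) → q₁ = q₂) := by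
  obtain ⟨k, ϑ, c, hc, hpre, p, q, hpq, hle⟩ :=
    order_property_gives_quasi_order_general hM.setSaturated_aleph0 hNIP φ a b hb hop
  refine ⟨k, ϑ, c, hc, hpre.refl, hpre.trans, Set.Icc p q, Set.Icc_infinite hpq, ?_, ?_⟩
  · intro x hx y hy
    simpa only [hle x hx y hy, hle y hy x hx] using le_total x y
  · intro x hx y hy
    simpa only [hle x hx y hy, hle y hy x hx] using le_antisymm
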